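/- Let p ≥ 2 and let ξ, η ∈ ℝ^k with |ξ| > 1. Then there exists a constant c(p), depending only on p, such that |H_{p−1}(ξ) − H_{p−1}(η)| ≤ c(p) · [ (|ξ|−1) + (|η|−1)_+ ]^{p−1} / (|ξ|−1) · |ξ − η|. -/

import Mathlib

/-- `Hmap lam ξ = (|ξ| − 1)₊^lam • ξ/|ξ|` for `ξ ≠ 0`, and `Hmap lam 0 = 0`. -/
noncomputable def Hmap {k : ℕ} (lam : ℝ) (ξ : EuclideanSpace ℝ (Fin k)) :
    EuclideanSpace ℝ (Fin k) :=
  open Classical in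
  if ξ = (0 : EuclideanSpace ℝ (Fin k)) then 0
  else (max (‖ξ‖ - 1) 0) ^ lam • ‖ξ‖⁻¹ • ξ

lemma Hmap_eq_smul {k : ℕ} (lam : ℝ) (ξ : EuclideanSpace ℝ (Fin k)) :
    Hmap lam ξ = (max (‖ξ‖ - 1) 0) ^ lam • ‖ξ‖⁻¹ • ξ := by
  unfold Hmap
  split_ifs with h
  · simp [h]
  · rfl

lemma rpow_sub_aux {s t l : ℝ} (hs : 0 ≤ s) (hst : s ≤ t) (ht : 0 < t) (hl : 1 ≤ l) :
    t * (t ^ l - s ^ l) ≤ l * t ^ l * (t - s) := by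
  have h1 : (-1 : ℝ) ≤ s / t - 1 := by
    have : 0 ≤ s / t := by positivity
    linarith
  have h := one_add_mul_self_le_rpow_one_add h1 hl
  rw [add_sub_cancel, Real.div_rpow hs ht.le] at h
  have hp : 0 < t ^ l := Real.rpow_pos_of_pos ht l
  have h2 := mul_le_mul_of_nonneg_left h (mul_pos ht hp).le
  have e1 : t * t ^ l * (1 + l * (s / t - 1)) = t * t ^ l + l * t ^ l * (s - t) := by
    field_simp
  have e2 : t * t ^ l * (s ^ l / t ^ l) = t * s ^ l := by
    field_simp
  rw [e1, e2] at h2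
  linarith

lemma rpow_abs_aux {a b l : ℝ} (ha : 0 < a) (hb : 0 ≤ b) (hl : 1 ≤ l) :
    a * |a ^ l - b ^ l| ≤ l * (a + b) ^ l * |a - b| := by
  have hl0 : 0 ≤ l := by linarith
  rcases le_total b a with h | h
  · have hm := Real.rpow_le_rpow hb h hl0
    rw [abs_of_nonneg (by linarith), abs_of_nonneg (by linarith)]
    refine (rpow_sub_aux hb h ha hl).trans ?_
    have : a ^ l ≤ (a + b) ^ l := Real.rpow_le_rpow ha.le (by linarith) hl0
    have h3 : 0 ≤ a - b := by linarith
    gcongr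
  · have hm := Real.rpow_le_rpow ha.le h hl0
    rw [abs_sub_comm, abs_sub_comm a b, abs_of_nonneg (by linarith), abs_of_nonneg (by linarith)]
    have h3 : 0 ≤ b - a := by linarith
    have h4 : 0 ≤ b ^ l - a ^ l := by linarith
    refine (mul_le_mul_of_nonneg_right h h4).trans ?_
    refine (rpow_sub_aux ha.le h (by linarith) hl).trans ?_
    have : b ^ l ≤ (a + b) ^ l := Real.rpow_le_rpow hb (by linarith) hl0
    gcongr

lemma dir_aux {k : ℕ} (ξ η : EuclideanSpace ℝ (Fin k)) (h : 0 < ‖ξ‖) :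
    ‖ξ‖ * ‖‖ξ‖⁻¹ • ξ - ‖η‖⁻¹ • η‖ ≤ 2 * ‖ξ - η‖ := by
  by_cases h0 : η = 0
  · subst h0
    simp only [norm_zero, smul_zero, sub_zero, norm_smul, norm_inv, norm_norm]
    rw [inv_mul_cancel₀ h.ne']
    linarith
  have hn : 0 < ‖η‖ := norm_pos_iff.mpr h0
  have e : ‖ξ‖ • (‖ξ‖⁻¹ • ξ - ‖η‖⁻¹ • η) = (ξ - η) + ((‖η‖ - ‖ξ‖) * ‖η‖⁻¹) • η := by
    rw [smul_sub, smul_smul, smul_smul, mul_inv_cancel₀ h.ne', sub_mul, mul_inv_cancel₀ hn.ne',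
      sub_smul]
    simp
  have e2 : ‖ξ‖ * ‖‖ξ‖⁻¹ • ξ - ‖η‖⁻¹ • η‖ = ‖‖ξ‖ • (‖ξ‖⁻¹ • ξ - ‖η‖⁻¹ • η)‖ := by
    rw [norm_smul, norm_norm]
  rw [e2, e]
  refine (norm_add_le _ _).trans ?_
  have e3 : ‖((‖η‖ - ‖ξ‖) * ‖η‖⁻¹) • η‖ = |‖η‖ - ‖ξ‖| := by
    rw [norm_smul, norm_mul, norm_inv, norm_norm, mul_assoc, inv_mul_cancel₀ hn.ne', mul_one,
      Real.norm_eq_abs]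
  have := abs_norm_sub_norm_le η ξ
  rw [norm_sub_rev] at this
  rw [e3]
  linarith

/-- for `p ≥ 2` there is a constant `c(p)`, depending only on `p`, such that
for all `ξ, η ∈ ℝ^k` with `|ξ| > 1`,
`|H_{p−1}(ξ) − H_{p−1}(η)| ≤ c(p) [(|ξ|−1) + (|η|−1)₊]^{p−1} / (|ξ|−1) · |ξ − η|`. -/
theorem Hmap_difference_estimate (p : ℝ) (hp : 2 ≤ p) :
    ∃ c : ℝ, 0 < c ∧ ∀ (k : ℕ) (ξ η : EuclideanSpace ℝ (Fin k)), 1 < ‖ξ‖ →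
      ‖Hmap (p - 1) ξ - Hmap (p - 1) η‖ ≤
        c * ((‖ξ‖ - 1) + max (‖η‖ - 1) 0) ^ (p - 1) / (‖ξ‖ - 1) * ‖ξ - η‖ := by
  refine ⟨p - 1 + 2, by linarith, fun k ξ η hξ => ?_⟩
  have hl : 1 ≤ p - 1 := by linarith
  generalize p - 1 = l at hl
  rw [Hmap_eq_smul, Hmap_eq_smul, max_eq_left (by linarith : 0 ≤ ‖ξ‖ - 1)]
  have ha : 0 < ‖ξ‖ - 1 := by linarith
  have hb : 0 ≤ max (‖η‖ - 1) 0 := le_max_right _ _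
  have hab : |(‖ξ‖ - 1) - max (‖η‖ - 1) 0| ≤ ‖ξ - η‖ := by
    refine le_trans ?_ (abs_norm_sub_norm_le ξ η)
    have h1 := abs_max_sub_max_le_abs (‖ξ‖ - 1) (‖η‖ - 1) 0
    rw [max_eq_left ha.le] at h1
    simpa using h1
  have hdir := dir_aux ξ η (by linarith)
  have hy : ‖‖η‖⁻¹ • η‖ ≤ 1 := by
    rw [norm_smul, norm_inv, norm_norm]
    exact inv_mul_le_one
  have hξa : ‖ξ‖ - 1 ≤ ‖ξ‖ := by linarith
  generalize max (‖η‖ - 1) 0 = b at *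
  generalize ‖ξ‖ - 1 = a at *
  generalize ‖ξ‖⁻¹ • ξ = x at *
  generalize ‖η‖⁻¹ • η = y at *
  have key := rpow_abs_aux ha hb hl
  have hmono : a ^ l ≤ (a + b) ^ l := Real.rpow_le_rpow ha.le (by linarith) (by linarith)
  have hal : 0 < a ^ l := Real.rpow_pos_of_pos ha l
  have e : a ^ l • x - b ^ l • y = a ^ l • (x - y) + (a ^ l - b ^ l) • y := by
    rw [smul_sub, sub_smul]; abel
  have hn : ‖a ^ l • x - b ^ l • y‖ ≤ a ^ l * ‖x - y‖ + |a ^ l - b ^ l| := by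
    rw [e]
    refine (norm_add_le _ _).trans ?_
    rw [norm_smul, norm_smul, Real.norm_eq_abs, Real.norm_eq_abs, abs_of_pos hal]
    have := mul_le_mul_of_nonneg_left hy (abs_nonneg (a ^ l - b ^ l))
    linarith
  rw [div_mul_eq_mul_div, le_div_iff₀ ha]
  have h1 : a * ‖x - y‖ ≤ 2 * ‖ξ - η‖ :=
    (mul_le_mul_of_nonneg_right hξa (norm_nonneg _)).trans hdir
  have h2 : a ^ l * (a * ‖x - y‖) ≤ (a + b) ^ l * (2 * ‖ξ - η‖) := by
    gcongr
  have h3 : l * (a + b) ^ l * |a - b| ≤ l * (a + b) ^ l * ‖ξ - η‖ := by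
    gcongr
  have h4 := mul_le_mul_of_nonneg_right hn ha.le
  nlinarith
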